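/- Under the Frenet frame setup, assume κ_t ≡ 0 (NR is developable) and κ_ν(u₀) ≠ 0, and let q = (u₀, 1/κ_ν(u₀)) (a singular point of NR). Then ĥ is a unit normal vector field of NR (⟨NR_u, ĥ⟩ = ⟨NR_w, ĥ⟩ = 0 everywhere), and the map (u,w) ↦ (NR(u,w), ĥ(u)) ∈ ℝ³ × ℝ³ is an immersion at q (i.e. NR is a front at q) if and only if κ_s(u₀) ≠ 0. -/

import Mathlib

open Filter

noncomputable section

/-- Vectors in ℝ³, modeled as `Fin 3 → ℝ`. -/
abbrev R3 : Type := Fin 3 → ℝ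

/-- The Euclidean inner product on ℝ³. -/
def dot3 (a b : R3) : ℝ := a 0 * b 0 + a 1 * b 1 + a 2 * b 2

/-- The determinant det(a,b,c) of three vectors of ℝ³. -/
def det3 (a b c : R3) : ℝ := Matrix.det (Matrix.of ![a, b, c])

/-- Partial derivative in the `u`-direction. -/
def pu {E : Type*} [NormedAddCommGroup E] [NormedSpace ℝ E] (F : ℝ × ℝ → E) (p : ℝ × ℝ) : E :=
  fderiv ℝ F p (1, 0)

/-- Partial derivative in the `w`-direction. -/
def pw {E : Type*} [NormedAddCommGroup E] [NormedSpace ℝ E] (F : ℝ × ℝ → E) (p : ℝ × ℝ) : E :=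
  fderiv ℝ F p (0, 1)

/-- The Frenet-type frame setup along the singular locus γ̂: `{γ̂', ĥ, ν̂}` is an
orthonormal frame satisfying the Frenet-type equations with singular curvature κ_s,
limiting normal curvature κ_ν and cuspidal torsion κ_t. -/
structure FrenetSetup (γ h ν : ℝ → R3) (κs κν κt : ℝ → ℝ) : Prop where
  smooth_γ : ContDiff ℝ (⊤ : ℕ∞) γ
  smooth_h : ContDiff ℝ (⊤ : ℕ∞) h
  smooth_ν : ContDiff ℝ (⊤ : ℕ∞) ν
  smooth_κs : ContDiff ℝ (⊤ : ℕ∞) κs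
  smooth_κν : ContDiff ℝ (⊤ : ℕ∞) κν
  smooth_κt : ContDiff ℝ (⊤ : ℕ∞) κt
  unit_t : ∀ u, dot3 (deriv γ u) (deriv γ u) = 1
  unit_h : ∀ u, dot3 (h u) (h u) = 1
  unit_ν : ∀ u, dot3 (ν u) (ν u) = 1
  orth_th : ∀ u, dot3 (deriv γ u) (h u) = 0
  orth_tν : ∀ u, dot3 (deriv γ u) (ν u) = 0
  orth_hν : ∀ u, dot3 (h u) (ν u) = 0
  frenet_t : ∀ u, deriv (deriv γ) u = κs u • h u + κν u • ν u
  frenet_h : ∀ u, deriv h u = (-κs u) • deriv γ u + κt u • ν u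
  frenet_ν : ∀ u, deriv ν u = (-κν u) • deriv γ u - κt u • h u

/-- The normal ruled surface NR(u,w) = γ̂(u) + w·ν̂(u). -/
def NR (γ ν : ℝ → R3) (p : ℝ × ℝ) : R3 := γ p.1 + p.2 • ν p.1

/-! At `(u, w)` the map `(NR, ĥ)` has the partial derivatives
`((1 - w κ_ν) γ̂' - w κ_t ĥ, -κ_s γ̂' + κ_t ν̂)` and `(ν̂, 0)`. Since `NR_u` has no
`ν̂`-component, these two vectors are independent unless the first one vanishes, i.e. unless
`w κ_ν = 1` and `κ_s = κ_t = 0`. -/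

lemma linearIndependent_of_dotProduct_eq_zero {K ι n : Type*} [Field K] [Fintype n]
    {v : ι → n → K} (orthogonal : Pairwise fun i j => v i ⬝ᵥ v j = 0)
    (anisotropic : ∀ i, v i ⬝ᵥ v i ≠ 0) : LinearIndependent K v := by
  have isOrtho : (dotProductBilin (m := n) (A := K) K K).IsOrthoᵢ v := orthogonal
  exact LinearMap.linearIndependent_of_isOrthoᵢ isOrtho anisotropic

lemma injective_iff_linearIndependent_pair {R M : Type*} [Ring R] [AddCommGroup M] [Module R M]
    (L : R × R →ₗ[R] M) :
    Function.Injective L ↔ LinearIndependent R ![L (1, 0), L (0, 1)] := by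
  have apply_eq (s t : R) : L (s, t) = s • L (1, 0) + t • L (0, 1) := by
    rw [← map_smul, ← map_smul, ← map_add]
    simp
  rw [injective_iff_map_eq_zero, LinearIndependent.pair_iff, Prod.forall]
  refine forall₂_congr fun s t => ?_
  rw [apply_eq s t, Prod.mk_eq_zero]

lemma linearIndependent_pair_prod_iff_ne_zero {R M : Type*} [CommRing R] [IsDomain R]
    [AddCommGroup M] [Module R M] {x y z : M}
    (hxyz : LinearIndependent R ![x, y, z]) (a b c d : R) :
    LinearIndependent R ![(a • x + b • y, c • x + d • z), (z, 0)] ↔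
      a ≠ 0 ∨ b ≠ 0 ∨ c ≠ 0 ∨ d ≠ 0 := by
  have coeff_eq_zero {r s t : R} (hrst : r • x + s • y + t • z = 0) : r = 0 ∧ s = 0 ∧ t = 0 := by
    have := Fintype.linearIndependent_iff.1 hxyz ![r, s, t]
      (by simpa [Fin.sum_univ_three] using hrst)
    exact ⟨this 0, this 1, this 2⟩
  refine ⟨fun hli => ?_, fun hne => LinearIndependent.pair_iff.2 fun s t hst => ?_⟩
  · by_contra! ⟨ha, hb, hc, hd⟩
    exact hli.ne_zero 0 (by simp [ha, hb, hc, hd])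
  · simp only [Prod.smul_mk, Prod.mk_add_mk, Prod.mk_eq_zero, smul_zero, add_zero] at hst
    obtain ⟨hsa, hsb, ht⟩ : s * a = 0 ∧ s * b = 0 ∧ t = 0 :=
      coeff_eq_zero (by rw [← hst.1]; module)
    obtain ⟨hsc, -, hsd⟩ : s * c = 0 ∧ (0 : R) = 0 ∧ s * d = 0 :=
      coeff_eq_zero (by rw [← hst.2]; module)
    simp only [mul_eq_zero] at hsa hsb hsc hsd
    exact ⟨by tauto, ht⟩

section PartialDerivatives

variable {E F : Type*} [NormedAddCommGroup E] [NormedSpace ℝ E]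
  [NormedAddCommGroup F] [NormedSpace ℝ F]

lemma injective_fderiv_iff_linearIndependent_pu_pw (f : ℝ × ℝ → E) (p : ℝ × ℝ) :
    Function.Injective (fderiv ℝ f p) ↔ LinearIndependent ℝ ![pu f p, pw f p] :=
  injective_iff_linearIndependent_pair (fderiv ℝ f p).toLinearMap

lemma pu_prodMk {f : ℝ × ℝ → E} {g : ℝ × ℝ → F} {p : ℝ × ℝ}
    (hf : DifferentiableAt ℝ f p) (hg : DifferentiableAt ℝ g p) :
    pu (fun q => (f q, g q)) p = (pu f p, pu g p) := by
  simp [pu, hf.fderiv_prodMk hg]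

lemma pw_prodMk {f : ℝ × ℝ → E} {g : ℝ × ℝ → F} {p : ℝ × ℝ}
    (hf : DifferentiableAt ℝ f p) (hg : DifferentiableAt ℝ g p) :
    pw (fun q => (f q, g q)) p = (pw f p, pw g p) := by
  simp [pw, hf.fderiv_prodMk hg]

variable {c : ℝ → E} {p : ℝ × ℝ}

lemma hasFDerivAt_comp_fst (hc : DifferentiableAt ℝ c p.1) :
    HasFDerivAt (fun q : ℝ × ℝ => c q.1)
      ((ContinuousLinearMap.fst ℝ ℝ ℝ).smulRight (deriv c p.1)) p :=
  hc.hasDerivAt.hasFDerivAt.comp p hasFDerivAt_fst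

lemma pu_comp_fst (hc : DifferentiableAt ℝ c p.1) :
    pu (fun q : ℝ × ℝ => c q.1) p = deriv c p.1 := by
  simp [pu, (hasFDerivAt_comp_fst hc).fderiv]

lemma pw_comp_fst (hc : DifferentiableAt ℝ c p.1) :
    pw (fun q : ℝ × ℝ => c q.1) p = 0 := by
  simp [pw, (hasFDerivAt_comp_fst hc).fderiv]

end PartialDerivatives

section RuledSurface

variable {γ ν : ℝ → R3} {p : ℝ × ℝ}

lemma hasFDerivAt_NR (hγ : DifferentiableAt ℝ γ p.1) (hν : DifferentiableAt ℝ ν p.1) :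
    HasFDerivAt (NR γ ν)
      ((ContinuousLinearMap.fst ℝ ℝ ℝ).smulRight (deriv γ p.1) +
        (p.2 • (ContinuousLinearMap.fst ℝ ℝ ℝ).smulRight (deriv ν p.1) +
          (ContinuousLinearMap.snd ℝ ℝ ℝ).smulRight (ν p.1))) p :=
  (hasFDerivAt_comp_fst hγ).add (hasFDerivAt_snd.smul (hasFDerivAt_comp_fst hν))

lemma pu_NR (hγ : DifferentiableAt ℝ γ p.1) (hν : DifferentiableAt ℝ ν p.1) :
    pu (NR γ ν) p = deriv γ p.1 + p.2 • deriv ν p.1 := by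
  simp [pu, (hasFDerivAt_NR hγ hν).fderiv]

lemma pw_NR (hγ : DifferentiableAt ℝ γ p.1) (hν : DifferentiableAt ℝ ν p.1) :
    pw (NR γ ν) p = ν p.1 := by
  simp [pw, (hasFDerivAt_NR hγ hν).fderiv]

end RuledSurface

lemma dot3_eq_dotProduct (a b : R3) : dot3 a b = a ⬝ᵥ b :=
  (Matrix.vec3_dotProduct a b).symm

namespace FrenetSetup

variable {γ h ν : ℝ → R3} {κs κν κt : ℝ → ℝ}

lemma linearIndependent_frame (H : FrenetSetup γ h ν κs κν κt) (u : ℝ) :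
    LinearIndependent ℝ ![deriv γ u, h u, ν u] := by
  have th := H.orth_th u
  have tν := H.orth_tν u
  have hν := H.orth_hν u
  have tt := H.unit_t u
  have hh := H.unit_h u
  have νν := H.unit_ν u
  rw [dot3_eq_dotProduct] at th tν hν tt hh νν
  refine linearIndependent_of_dotProduct_eq_zero (fun i j hij => ?_) (fun i => ?_)
  · fin_cases i <;> fin_cases j <;>
      simp_all [dotProduct_comm (h u) (deriv γ u), dotProduct_comm (ν u) (deriv γ u),
        dotProduct_comm (ν u) (h u)]
  · fin_cases i <;> simp [tt, hh, νν]

lemma differentiable_γ (H : FrenetSetup γ h ν κs κν κt) : Differentiable ℝ γ :=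
  H.smooth_γ.differentiable (by simp)

lemma differentiable_h (H : FrenetSetup γ h ν κs κν κt) : Differentiable ℝ h :=
  H.smooth_h.differentiable (by simp)

lemma differentiable_ν (H : FrenetSetup γ h ν κs κν κt) : Differentiable ℝ ν :=
  H.smooth_ν.differentiable (by simp)

protected lemma pu_NR (H : FrenetSetup γ h ν κs κν κt) (p : ℝ × ℝ) :
    pu (NR γ ν) p = (1 - p.2 * κν p.1) • deriv γ p.1 + (-(p.2 * κt p.1)) • h p.1 := by
  rw [pu_NR (H.differentiable_γ p.1) (H.differentiable_ν p.1), H.frenet_ν]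
  module

protected lemma pw_NR (H : FrenetSetup γ h ν κs κν κt) (p : ℝ × ℝ) : pw (NR γ ν) p = ν p.1 :=
  pw_NR (H.differentiable_γ p.1) (H.differentiable_ν p.1)

lemma dot3_pu_NR (H : FrenetSetup γ h ν κs κν κt) (p : ℝ × ℝ) :
    dot3 (pu (NR γ ν) p) (h p.1) = -(p.2 * κt p.1) := by
  have th := H.orth_th p.1
  have hh := H.unit_h p.1
  rw [dot3_eq_dotProduct] at th hh ⊢
  simp [H.pu_NR, th, hh]

lemma dot3_pw_NR (H : FrenetSetup γ h ν κs κν κt) (p : ℝ × ℝ) :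
    dot3 (pw (NR γ ν) p) (h p.1) = 0 := by
  rw [H.pw_NR, dot3_eq_dotProduct, dotProduct_comm, ← dot3_eq_dotProduct, H.orth_hν]

lemma injective_fderiv_NR_h_iff (H : FrenetSetup γ h ν κs κν κt) (p : ℝ × ℝ) :
    Function.Injective (fderiv ℝ (fun q : ℝ × ℝ => (NR γ ν q, h q.1)) p) ↔
      p.2 * κν p.1 ≠ 1 ∨ κs p.1 ≠ 0 ∨ κt p.1 ≠ 0 := by
  have hNR : DifferentiableAt ℝ (NR γ ν) p :=
    (hasFDerivAt_NR (H.differentiable_γ p.1) (H.differentiable_ν p.1)).differentiableAt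
  have hh : DifferentiableAt ℝ (fun q : ℝ × ℝ => h q.1) p :=
    (hasFDerivAt_comp_fst (H.differentiable_h p.1)).differentiableAt
  rw [injective_fderiv_iff_linearIndependent_pu_pw, pu_prodMk hNR hh, pw_prodMk hNR hh,
    H.pu_NR, H.pw_NR, pu_comp_fst (H.differentiable_h p.1), pw_comp_fst (H.differentiable_h p.1),
    H.frenet_h,
    linearIndependent_pair_prod_iff_ne_zero (H.linearIndependent_frame p.1)]
  simp only [ne_eq, sub_eq_zero, neg_eq_zero, mul_eq_zero, eq_comm (a := (1 : ℝ))]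
  tauto

end FrenetSetup

theorem stmt_5_general (γ h ν : ℝ → R3) (κs κν κt : ℝ → ℝ) (H : FrenetSetup γ h ν κs κν κt) :
    (∀ p : ℝ × ℝ, dot3 (pu (NR γ ν) p) (h p.1) = -(p.2 * κt p.1) ∧
        dot3 (pw (NR γ ν) p) (h p.1) = 0) ∧
      ∀ p : ℝ × ℝ, Function.Injective (fderiv ℝ (fun q : ℝ × ℝ => (NR γ ν q, h q.1)) p) ↔
        p.2 * κν p.1 ≠ 1 ∨ κs p.1 ≠ 0 ∨ κt p.1 ≠ 0 :=
  ⟨fun p => ⟨H.dot3_pu_NR p, H.dot3_pw_NR p⟩, H.injective_fderiv_NR_h_iff⟩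

/-- if κ_t ≡ 0 and κ_ν(u₀) ≠ 0, then ĥ is a unit normal of NR, and NR is
a front at q = (u₀, 1/κ_ν(u₀)) iff κ_s(u₀) ≠ 0. -/
theorem stmt_5 (γ h ν : ℝ → R3) (κs κν κt : ℝ → ℝ) (H : FrenetSetup γ h ν κs κν κt)
    (hκt : ∀ u : ℝ, κt u = 0) (u₀ : ℝ) (hκν : κν u₀ ≠ 0) :
    (∀ p : ℝ × ℝ, dot3 (pu (NR γ ν) p) (h p.1) = 0 ∧ dot3 (pw (NR γ ν) p) (h p.1) = 0) ∧
      (Function.Injective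
          ⇑(fderiv ℝ (fun p : ℝ × ℝ => (NR γ ν p, h p.1)) (u₀, (κν u₀)⁻¹)) ↔
        κs u₀ ≠ 0) := by
  obtain ⟨hnormal, hfront⟩ := stmt_5_general γ h ν κs κν κt H
  exact ⟨fun p => by simpa [hκt] using hnormal p, by simp [hfront, hκt, hκν]⟩
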